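/- Let s be an even integer with s ≥ 2 and N ∈ ℕ. For all x,y ∈ SO(3) with ω(y⁻¹x) ∉ {0,π} and every n ∈ {1,2,3}: X_n^y σ_N(x,y) = −σ̃_N′(ω(y⁻¹x))·e_n(y⁻¹x) and X_n^x σ_N(x,y) = −X_n^y σ_N(x,y). Moreover X_n^y σ_N(x,x) = 0 for every x ∈ SO(3). -/

import Mathlib

noncomputable section

abbrev Mat3 := Matrix (Fin 3) (Fin 3) ℝ

/-- membership in SO(3) -/
def IsSO3 (x : Mat3) : Prop := x.transpose * x = 1 ∧ x.det = 1

/-- rotation angle -/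
def rotAngle (x : Mat3) : ℝ := Real.arccos ((Matrix.trace x - 1) / 2)

/-- generators of so(3) -/
def Lgen : Fin 3 → Mat3 :=
  ![!![0, 0, 0; 0, 0, -1; 0, 1, 0],
    !![0, 0, 1; 0, 0, 0; -1, 0, 0],
    !![0, -1, 0; 1, 0, 0; 0, 0, 0]]

/-- derivative in the first variable along generator `i` -/
def Xx (i : Fin 3) (f : Mat3 → Mat3 → ℝ) : Mat3 → Mat3 → ℝ :=
  fun x y => deriv (fun t : ℝ => f (x * NormedSpace.exp (t • Lgen i)) y) 0

/-- derivative in the second variable along generator `i` -/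
def Xy (i : Fin 3) (f : Mat3 → Mat3 → ℝ) : Mat3 → Mat3 → ℝ :=
  fun x y => deriv (fun t : ℝ => f x (y * NormedSpace.exp (t • Lgen i))) 0

/-- iterated integrals of the sign of the Chebyshev polynomial: the perfect B-spline chain -/
def fspline (s : ℕ) : ℕ → ℝ → ℝ
  | 0 => fun x => (-1 : ℝ) ^ (s - 1) * Real.sign ((Polynomial.Chebyshev.U ℝ ((s : ℤ) - 1)).eval x)
  | (k + 1) => fun x => ∫ t in (-1 : ℝ)..x, fspline s k t

/-- the scaled perfect B-spline g̃_{s-1} -/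
def gtilde (s : ℕ) (x : ℝ) : ℝ := fspline s (s - 1) (2 * x)

/-- discrete norm ‖g̃‖_{1,N} -/
def gnorm (s N : ℕ) : ℝ :=
  ∑ k ∈ Finset.Icc (-(N : ℤ)) (N : ℤ), gtilde s ((k : ℝ) / (2 * ((N : ℝ) + 1)))

/-- the trigonometric kernel σ̃_N (real-valued) -/
def sigmaT (s N : ℕ) (t : ℝ) : ℝ :=
  ((1 / (gnorm s N : ℂ)) *
      ∑ k ∈ Finset.Icc (-(N : ℤ)) (N : ℤ),
        (gtilde s ((k : ℝ) / (2 * ((N : ℝ) + 1))) : ℂ) * Complex.exp ((k : ℂ) * t * Complex.I)).re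

/-- the zonal kernel σ_N on SO(3) -/
def sigmaK (s N : ℕ) (x y : Mat3) : ℝ := sigmaT s N (rotAngle (y⁻¹ * x))

/-- rotation axis components -/
def axisComp : Fin 3 → Mat3 → ℝ :=
  ![fun x => (x 2 1 - x 1 2) / (2 * Real.sin (rotAngle x)),
    fun x => (x 0 2 - x 2 0) / (2 * Real.sin (rotAngle x)),
    fun x => (x 1 0 - x 0 1) / (2 * Real.sin (rotAngle x))]

/-- Levi-Civita symbol on `Fin 3` -/
def eps3 (a b c : Fin 3) : ℝ :=
  if (a, b, c) = (0, 1, 2) ∨ (a, b, c) = (1, 2, 0) ∨ (a, b, c) = (2, 0, 1) then 1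
  else if (a, b, c) = (2, 1, 0) ∨ (a, b, c) = (1, 0, 2) ∨ (a, b, c) = (0, 2, 1) then -1
  else 0

/-- constants c_{l,s} -/
def cConst : ℕ → ℕ → ℝ
  | 0, s => 1.02 * (Nat.factorial (s - 1)) * 2 ^ s * s
  | 1, s => 1.02 * (Nat.factorial (s - 1)) * 2 ^ s * (2 * s)
  | 2, s => 1.02 * (Nat.factorial (s - 1)) * 2 ^ s * (4 * s + 1)
  | _, s => 1.02 * (Nat.factorial (s - 1)) * 2 ^ s * (9 * s - 2)

/-- ζ(m) for natural m -/
def zetaNat (m : ℕ) : ℝ := ∑' n : ℕ, (1 : ℝ) / ((n : ℝ) + 1) ^ m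

/-- constants C_{i,s} = 124 c_{i,s} ζ(s-2) -/
def CConst (i s : ℕ) : ℝ := 124 * cConst i s * zetaNat (s - 2)

end

open scoped Real

attribute [local instance] Matrix.linftyOpNormedRing Matrix.linftyOpNormedAlgebra in
/-- Along a one-parameter subgroup, a linear functional of `exp (t • A)` has at `0` the
derivative obtained by applying the functional to `A`. -/
lemma hasDerivAt_linearMap_exp_smul_zero (φ : Mat3 →ₗ[ℝ] ℝ) (A : Mat3) :
    HasDerivAt (fun t : ℝ => φ (NormedSpace.exp (t • A))) (φ A) 0 := by
  have h := hasDerivAt_exp_smul_const (𝕂 := ℝ) A (0 : ℝ)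
  rw [zero_smul, NormedSpace.exp_zero, one_mul] at h
  exact (LinearMap.toContinuousLinearMap φ).hasFDerivAt.comp_hasDerivAt (0 : ℝ) h

lemma hasDerivAt_trace_mul_exp_smul (z A : Mat3) :
    HasDerivAt (fun t : ℝ => (z * NormedSpace.exp (t • A)).trace) (z * A).trace 0 :=
  hasDerivAt_linearMap_exp_smul_zero
    ((Matrix.traceLinearMap (Fin 3) ℝ ℝ).comp (LinearMap.mulLeft ℝ z)) A

lemma differentiable_sigmaT (s N : ℕ) : Differentiable ℝ (sigmaT s N) := by
  intro t
  have h : DifferentiableAt ℝ (fun t : ℝ => (1 / (gnorm s N : ℂ)) *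
      ∑ k ∈ Finset.Icc (-(N : ℤ)) (N : ℤ), (gtilde s ((k : ℝ) / (2 * ((N : ℝ) + 1))) : ℂ) *
        Complex.exp ((k : ℂ) * t * Complex.I)) t := by
    have h0 : DifferentiableAt ℝ (fun t : ℝ => (t : ℂ)) t :=
      Complex.ofRealCLM.differentiableAt
    fun_prop
  exact Complex.reCLM.differentiableAt.comp t h

/-- A generator pairs with a rotation to give a component of the rotation axis. -/
lemma trace_mul_Lgen (z : Mat3) (h : Real.sin (rotAngle z) ≠ 0) (n : Fin 3) :
    (z * Lgen n).trace = -(2 * Real.sin (rotAngle z) * axisComp n z) := by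
  fin_cases n <;>
  · simp [axisComp, Lgen, Matrix.trace, Matrix.mul_apply, Fin.sum_univ_three]
    field_simp
    ring

/-- Chain rule for the rotation angle along a curve of matrices. -/
lemma hasDerivAt_rotAngle {c : ℝ → Mat3} {d : ℝ}
    (hc : HasDerivAt (fun t => (c t).trace) d 0)
    (h0 : rotAngle (c 0) ≠ 0) (hπ : rotAngle (c 0) ≠ π) :
    HasDerivAt (fun t => rotAngle (c t)) (-(d / (2 * Real.sin (rotAngle (c 0))))) 0 := by
  have h1 : ((c 0).trace - 1) / 2 ≠ 1 := fun h => h0 (by simp [rotAngle, h])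
  have h2 : ((c 0).trace - 1) / 2 ≠ -1 := fun h => hπ (by simp [rotAngle, h])
  have h := (Real.hasDerivAt_arccos h2 h1).comp (0 : ℝ) ((hc.sub_const 1).div_const 2)
  refine h.congr_deriv ?_
  rw [rotAngle, Real.sin_arccos]
  ring

lemma sin_rotAngle_ne_zero {z : Mat3} (h0 : rotAngle z ≠ 0) (hπ : rotAngle z ≠ π) :
    Real.sin (rotAngle z) ≠ 0 :=
  (Real.sin_pos_of_pos_of_lt_pi (lt_of_le_of_ne (Real.arccos_nonneg _) h0.symm)
    (lt_of_le_of_ne (Real.arccos_le_pi _) hπ)).ne'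

lemma inv_mul_exp_smul_mul (x y A : Mat3) (t : ℝ) :
    (y * NormedSpace.exp (t • A))⁻¹ * x = NormedSpace.exp (t • -A) * (y⁻¹ * x) := by
  rw [Matrix.mul_inv_rev, smul_neg, Matrix.exp_neg, Matrix.mul_assoc]

lemma Xx_sigmaK (s N : ℕ) {x y : Mat3} (h0 : rotAngle (y⁻¹ * x) ≠ 0)
    (hπ : rotAngle (y⁻¹ * x) ≠ π) (n : Fin 3) :
    Xx n (sigmaK s N) x y
      = deriv (sigmaT s N) (rotAngle (y⁻¹ * x)) * axisComp n (y⁻¹ * x) := by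
  have hs := sin_rotAngle_ne_zero h0 hπ
  have h := hasDerivAt_rotAngle
    (hasDerivAt_trace_mul_exp_smul (y⁻¹ * x) (Lgen n)) (by simpa using h0) (by simpa using hπ)
  have h' := (differentiable_sigmaT s N _).hasDerivAt.comp (0 : ℝ) h
  simp only [zero_smul, NormedSpace.exp_zero, mul_one] at h'
  rw [trace_mul_Lgen _ hs] at h'
  simp only [Xx, sigmaK, ← Matrix.mul_assoc]
  refine h'.deriv.trans ?_
  field_simp

lemma Xy_sigmaK (s N : ℕ) {x y : Mat3} (h0 : rotAngle (y⁻¹ * x) ≠ 0)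
    (hπ : rotAngle (y⁻¹ * x) ≠ π) (n : Fin 3) :
    Xy n (sigmaK s N) x y
      = -(deriv (sigmaT s N) (rotAngle (y⁻¹ * x))) * axisComp n (y⁻¹ * x) := by
  have hfun (t : ℝ) : sigmaK s N x (y * NormedSpace.exp (t • Lgen n))
      = sigmaK s N (x * NormedSpace.exp (-t • Lgen n)) y := by
    simp only [sigmaK, rotAngle]
    rw [inv_mul_exp_smul_mul, Matrix.trace_mul_comm, ← Matrix.mul_assoc, smul_neg, neg_smul]
  have h := deriv_comp_neg (fun t : ℝ => sigmaK s N (x * NormedSpace.exp (t • Lgen n)) y) 0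
  rw [neg_zero] at h
  simp only [Xy, hfun]
  rw [h, neg_mul]
  exact congrArg Neg.neg (Xx_sigmaK s N h0 hπ n)

lemma Lgen_transpose (n : Fin 3) : (Lgen n).transpose = -Lgen n := by
  fin_cases n <;> ext i j <;> fin_cases i <;> fin_cases j <;> simp [Lgen]

/-- On the diagonal the kernel is even along each one-parameter subgroup. -/
lemma Xy_sigmaK_self (s N : ℕ) {x : Mat3} (hx : IsUnit x.det) (n : Fin 3) :
    Xy n (sigmaK s N) x x = 0 := by
  have heven (t : ℝ) : sigmaK s N x (x * NormedSpace.exp (-t • Lgen n))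
      = sigmaK s N x (x * NormedSpace.exp (t • Lgen n)) := by
    simp only [sigmaK, rotAngle]
    rw [inv_mul_exp_smul_mul, inv_mul_exp_smul_mul, Matrix.nonsing_inv_mul _ hx, mul_one, mul_one,
      ← Lgen_transpose, ← Matrix.transpose_smul, Matrix.exp_transpose, Matrix.trace_transpose,
      Lgen_transpose, neg_smul, smul_neg]
  have h := deriv_comp_neg (fun t : ℝ => sigmaK s N x (x * NormedSpace.exp (t • Lgen n))) 0
  simp only [heven, neg_zero] at h
  exact self_eq_neg.mp h

theorem first_derivative_kernel_formula
    (s N : ℕ) (hs_even : Even s) (hs : 2 ≤ s) :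
    (∀ x y : Mat3, IsSO3 x → IsSO3 y →
      rotAngle (y⁻¹ * x) ≠ 0 → rotAngle (y⁻¹ * x) ≠ π →
      ∀ n : Fin 3,
        Xy n (sigmaK s N) x y
          = -(deriv (sigmaT s N) (rotAngle (y⁻¹ * x))) * axisComp n (y⁻¹ * x) ∧
        Xx n (sigmaK s N) x y = -(Xy n (sigmaK s N) x y)) ∧
    (∀ x : Mat3, IsSO3 x → ∀ n : Fin 3, Xy n (sigmaK s N) x x = 0) := by
  refine ⟨fun x y _ _ h0 hπ n => ⟨Xy_sigmaK s N h0 hπ n, ?_⟩, fun x hx n =>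
    Xy_sigmaK_self s N (by simp [hx.2]) n⟩
  rw [Xy_sigmaK s N h0 hπ, Xx_sigmaK s N h0 hπ, neg_mul, neg_neg]
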